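/- Converse part of Theorem 5 (cyclic graph with i-th neighbor privacy): for every integer N ≥ 6, every i ∈ {2,…,N−3}, and every PIR scheme with cyclic-graph storage on N servers and privacy sets 𝒫_n = ℐ_n ∪ ℐ_{n+i} = {n−1, n, n+i−1, n+i} (mod N), the total download cost satisfies Σ_{k=1}^{N} D_k ≥ (5/2)·N·L; equivalently, the rate satisfies R ≤ 2/5. -/

import Mathlib

/-!
Write `R m` for the tuple of all messages except `W m`. For server `n` let
`x n = H(A n | R n, 𝒬)` and `y n = H(A n | R (n-1), 𝒬)` be the parts of its answer that come from
`W n` alone, respectively from `W (n-1)` alone. By privacy these numbers do not depend on whether the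
desired message is `n - 1`, `n` or `n + i`.

* Given `R k` and the queries, all answers except those of servers `k` and `k + 1` are determined,
  so decoding `W k` forces `L ≤ x k + y (k+1)` (`le_of_decode`).
* Since the answers determine `W k`, `D k ≥ L + H(all answers | W k, 𝒬)`. Keep only the answers of
  servers `k`, `k + 1` and `k - i`, the last one being bound to privacy for `k` through its `i`-th
  neighbor. By the chain rule, giving away all messages but one at each step,
  `H(all answers | W k, 𝒬) ≥ y k + x (k+1) + z`, where `z` can be taken to be either `x (k-i)` or
  `y (k-i)` (`download_lower`). This uses that the messages `k - i` and `k - i - 1` are not among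
  `k - 1`, `k`, `k + 1`, which is what `2 ≤ i ≤ N - 3` guarantees.

Averaging the two choices of `z` and summing over `k`, with `X = ∑ x n` and `Y = ∑ y n`:
`∑ D k ≥ N L + (3/2) (X + Y)` and `X + Y ≥ N L`, hence `∑ D k ≥ (5/2) N L`.

All the information theory rests on two facts: entropy decreases under functions (`H_mono`) and
submodularity (`H_submod`).
-/


/-!
Formalization of PIR with arbitrary privacy requirement sets.

A PIR scheme with `N` servers and `K` messages of equal length `L > 0` is modeled
by finitely-valued random variables on a common finite probability space:
messages `W 1, …, W K`, and for each server `n ∈ [1:N]` and desired index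
`k ∈ [1:K]`, a query `Q n k` and an answer `A n k`.  Shannon entropy,
conditional entropy and (conditional) mutual information are defined from the
probability mass function `p`.
-/

open scoped Classical BigOperators

noncomputable section

/-- A PIR scheme: a finite probability space together with the message, query and
answer random variables.  Only the variables indexed by `n ∈ [1:N]`, `k ∈ [1:K]`
are meaningful; all random variables are finitely valued (`ℕ`-valued on a finite
sample space). -/
structure PIRScheme (N K : ℕ) (L : ℝ) where
  /-- the sample space -/
  Ω : Type
  [fin : Fintype Ω]
  /-- the probability mass function -/
  p : Ω → ℝ
  p_nonneg : ∀ ω, 0 ≤ p ω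
  p_sum : ∑ ω : Ω, p ω = 1
  /-- the messages `W i`, `i ∈ [1:K]` -/
  W : ℕ → Ω → ℕ
  /-- `Q n k` is the query sent to server `n` when retrieving message `k` -/
  Q : ℕ → ℕ → Ω → ℕ
  /-- `A n k` is the answer of server `n` when retrieving message `k` -/
  A : ℕ → ℕ → Ω → ℕ

attribute [instance] PIRScheme.fin

namespace PIRScheme

variable {N K : ℕ} {L : ℝ} (S : PIRScheme N K L)

/-- `P[X = v]`. -/
def prob {α : Type*} (X : S.Ω → α) (v : α) : ℝ :=
  ∑ ω : S.Ω, if X ω = v then S.p ω else 0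

/-- Shannon entropy `H(X)`. -/
def H {α : Type*} (X : S.Ω → α) : ℝ :=
  - ∑ ω : S.Ω, S.p ω * Real.log (S.prob X (X ω))

/-- Conditional entropy `H(X | Y) := H(X, Y) - H(Y)`. -/
def Hc {α β : Type*} (X : S.Ω → α) (Y : S.Ω → β) : ℝ :=
  S.H (fun ω => (X ω, Y ω)) - S.H Y

/-- Mutual information `I(X ; Y) := H(X) + H(Y) - H(X, Y)`. -/
def MI {α β : Type*} (X : S.Ω → α) (Y : S.Ω → β) : ℝ :=
  S.H X + S.H Y - S.H (fun ω => (X ω, Y ω))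

/-- Conditional mutual information `I(X ; Y | Z) := H(X|Z) + H(Y|Z) - H(X,Y|Z)`. -/
def MIc {α β γ : Type*} (X : S.Ω → α) (Y : S.Ω → β) (Z : S.Ω → γ) : ℝ :=
  S.Hc X Z + S.Hc Y Z - S.Hc (fun ω => (X ω, Y ω)) Z

/-- The joint random variable `(W j)_{j ∈ T}` of a subcollection of the messages. -/
def jointW (T : Finset ℕ) : S.Ω → (T → ℕ) := fun ω j => S.W j ω

/-- The joint random variable of all `K` messages. -/
def allW : S.Ω → (Finset.Icc 1 K → ℕ) := S.jointW (Finset.Icc 1 K)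

/-- `𝒬`: the tuple of all queries `Q n k`, `n ∈ [1:N]`, `k ∈ [1:K]`. -/
def allQ : S.Ω → ((Finset.Icc 1 N ×ˢ Finset.Icc 1 K : Finset (ℕ × ℕ)) → ℕ) :=
  fun ω x => S.Q x.1.1 x.1.2 ω

/-- The tuple of answers `(A 1 k, …, A N k)` when retrieving message `k`. -/
def ansVec (k : ℕ) : S.Ω → (Finset.Icc 1 N → ℕ) := fun ω n => S.A n k ω

/-- The download cost `D k := ∑_{n=1}^N H(A n k)`. -/
def D (k : ℕ) : ℝ := ∑ n ∈ Finset.Icc 1 N, S.H (S.A n k)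

/-- The rate `R := K ⬝ L / ∑_{k=1}^K D k`. -/
def rate : ℝ := (K * L) / ∑ k ∈ Finset.Icc 1 K, S.D k

/-- Validity of a PIR scheme with respect to storage index sets `I n` and privacy
requirement sets `P n`:
(messages) the messages each have entropy `L` and are mutually independent;
(i) the messages are independent of all the queries;
(ii) each answer is a function of the server's storage and received query;
(iii) privacy: for all `θ1, θ2 ∈ P n` and every subcollection `T` of the messages,
  the answer of server `n` has the same conditional entropy whether `θ1` or `θ2`
  is being retrieved;
(iv) decodability: message `k` is determined by all the answers and the queries. -/
structure IsValid (S : PIRScheme N K L) (I P : ℕ → Finset ℕ) : Prop where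
  msg_entropy : ∀ i ∈ Finset.Icc 1 K, S.H (S.W i) = L
  msg_indep : S.H S.allW = ∑ i ∈ Finset.Icc 1 K, S.H (S.W i)
  stor_sub_priv : ∀ n ∈ Finset.Icc 1 N, I n ⊆ P n
  priv_sub : ∀ n ∈ Finset.Icc 1 N, P n ⊆ Finset.Icc 1 K
  query_indep : S.MI S.allW S.allQ = 0
  ans_det : ∀ n ∈ Finset.Icc 1 N, ∀ k ∈ Finset.Icc 1 K,
    S.Hc (S.A n k) (fun ω => (S.jointW (I n) ω, S.Q n k ω)) = 0
  privacy : ∀ n ∈ Finset.Icc 1 N, ∀ θ1 ∈ P n, ∀ θ2 ∈ P n, ∀ T ⊆ Finset.Icc 1 K,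
    S.Hc (S.A n θ1) (fun ω => (S.jointW T ω, S.allQ ω)) =
      S.Hc (S.A n θ2) (fun ω => (S.jointW T ω, S.allQ ω))
  decodable : ∀ k ∈ Finset.Icc 1 K, S.Hc (S.W k) (fun ω => (S.ansVec k ω, S.allQ ω)) = 0

end PIRScheme

/-- Path-graph storage on `N` servers (`K = N - 1` messages):
`𝒲_1 = {W 1}`, `𝒲_n = {W (n-1), W n}` for `2 ≤ n ≤ N - 1`, `𝒲_N = {W (N-1)}`. -/
def pathIndex (N : ℕ) : ℕ → Finset ℕ := fun n =>
  if n = 1 then {1} else if n = N then {N - 1} else {n - 1, n}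

/-- Modified-edge-server privacy sets on the path graph:
`𝒫_1 = 𝒫_2 = {1, 2}`, `𝒫_N = 𝒫_{N-1} = {N-2, N-1}`, and `𝒫_n = {n-1, n}`
for `2 ≤ n ≤ N - 1`. -/
def pathModEdgePriv (N : ℕ) : ℕ → Finset ℕ := fun n =>
  if n ≤ 2 then {1, 2} else if N - 1 ≤ n then {N - 2, N - 1} else {n - 1, n}

/-- The representative of `m` modulo `N` lying in `{1, …, N}` (so that index `0`
is identified with index `N`). -/
def cyc (N : ℕ) (m : ℤ) : ℕ := (((m - 1) % (N : ℤ)) + 1).toNat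

/-- Cyclic-graph storage on `N` servers (`K = N` messages):
`𝒲_n = {W (n-1), W n}` with indices mod `N`, i.e. `ℐ_n = {n - 1, n} (mod N)`. -/
def cycIndex (N : ℕ) : ℕ → Finset ℕ := fun n => {cyc N ((n : ℤ) - 1), cyc N (n : ℤ)}

/-- The cyclic interval `[a : a + len - 1]` of `len` consecutive indices mod `N`,
as a subset of `{1, …, N}`. -/
def cycInterval (N : ℕ) (a : ℤ) (len : ℕ) : Finset ℕ :=
  (Finset.range len).image fun j => cyc N (a + j)

/-! ### Entropy inequalities -/

namespace PIRScheme

section Entropy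

variable {N K : ℕ} {L : ℝ} (S : PIRScheme N K L) {α β γ δ : Type*}

lemma p_le_prob (X : S.Ω → α) (ω : S.Ω) : S.p ω ≤ S.prob X (X ω) := by
  unfold prob
  have := Finset.single_le_sum (f := fun ω' => if X ω' = X ω then S.p ω' else 0)
    (fun ω' _ => by split_ifs <;> simp [S.p_nonneg]) (Finset.mem_univ ω)
  simpa using this

/-- `prob` with an arbitrary decidability instance. -/
lemma prob_eq [DecidableEq α] (X : S.Ω → α) (v : α) :
    S.prob X v = ∑ ω, if X ω = v then S.p ω else 0 := by
  unfold prob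
  congr!

lemma prob_nonneg (X : S.Ω → α) (v : α) : 0 ≤ S.prob X v :=
  Finset.sum_nonneg fun ω _ => by split_ifs <;> simp [S.p_nonneg]

/-- If `X` is a function of `Y`, then `H(X) ≤ H(Y)`. -/
lemma H_mono {X : S.Ω → α} {Y : S.Ω → β} (h : ∀ ω ω', Y ω = Y ω' → X ω = X ω') :
    S.H X ≤ S.H Y := by
  unfold H
  refine neg_le_neg (Finset.sum_le_sum fun ω _ => ?_)
  rcases (S.p_nonneg ω).eq_or_lt with h0 | h0
  · simp [← h0]
  · refine mul_le_mul_of_nonneg_left (Real.log_le_log (h0.trans_le (S.p_le_prob Y ω)) ?_) h0.le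
    refine Finset.sum_le_sum fun ω' _ => ?_
    by_cases h1 : Y ω' = Y ω
    · simp [h1, h _ _ h1]
    · rw [if_neg h1]
      split_ifs <;> simp [S.p_nonneg]

lemma H_congr {X : S.Ω → α} {Y : S.Ω → β} (h : ∀ ω ω', Y ω = Y ω' ↔ X ω = X ω') :
    S.H X = S.H Y :=
  le_antisymm (S.H_mono fun _ _ => (h _ _).1) (S.H_mono fun _ _ => (h _ _).2)

/-- The joint law of `(X, Z)` and `(Y, Z)` glued along `Z` conditionally independently has total
mass at most one. This is the estimate that submodularity needs after `log t ≤ t - 1`. -/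
lemma sum_glued_le_one (X : S.Ω → α) (Y : S.Ω → β) (Z : S.Ω → γ) :
    ∑ ω, S.p ω * (S.prob (fun ω => (X ω, Z ω)) (X ω, Z ω) *
      S.prob (fun ω => (Y ω, Z ω)) (Y ω, Z ω) /
      (S.prob (fun ω => (X ω, Y ω, Z ω)) (X ω, Y ω, Z ω) * S.prob Z (Z ω))) ≤ 1 := by
  -- Expand both numerators as sums over `a` and `b`, and sum over `ω` first.
  have key : ∀ a b, ∑ ω, (if (X a, Z a) = (X ω, Z ω) then S.p a else 0) *
      (if (Y b, Z b) = (Y ω, Z ω) then S.p b else 0) * (S.p ω /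
      (S.prob (fun ω => (X ω, Y ω, Z ω)) (X ω, Y ω, Z ω) * S.prob Z (Z ω))) ≤
      S.p a * ((if Z b = Z a then S.p b else 0) / S.prob Z (Z a)) := by
    intro a b
    by_cases hz : Z b = Z a
    · rw [if_pos hz]
      have e : ∀ ω, (if (X a, Z a) = (X ω, Z ω) then S.p a else 0) *
          (if (Y b, Z b) = (Y ω, Z ω) then S.p b else 0) * (S.p ω /
          (S.prob (fun ω => (X ω, Y ω, Z ω)) (X ω, Y ω, Z ω) * S.prob Z (Z ω))) =
          S.p a * (S.p b / S.prob Z (Z a)) *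
          ((if (X ω, Y ω, Z ω) = (X a, Y b, Z a) then S.p ω else 0) /
            S.prob (fun ω => (X ω, Y ω, Z ω)) (X a, Y b, Z a)) := by
        intro ω
        by_cases h1 : (X ω, Y ω, Z ω) = (X a, Y b, Z a)
        · have h2 := h1
          simp only [Prod.mk.injEq] at h2
          obtain ⟨h2, h3, h4⟩ := h2
          simp only [h2, h3, h4, hz, if_true]
          ring
        · rw [if_neg h1]
          have : ¬ ((X a, Z a) = (X ω, Z ω) ∧ (Y b, Z b) = (Y ω, Z ω)) := by
            rintro ⟨h2, h3⟩
            simp only [Prod.mk.injEq] at h1 h2 h3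
            exact h1 ⟨h2.1.symm, h3.1.symm, h2.2.symm⟩
          rcases not_and_or.1 this with h | h <;> simp [h]
      rw [Finset.sum_congr rfl fun ω _ => e ω, ← Finset.mul_sum, ← Finset.sum_div,
        ← S.prob_eq fun ω => (X ω, Y ω, Z ω)]
      exact mul_le_of_le_one_right (mul_nonneg (S.p_nonneg _)
        (div_nonneg (S.p_nonneg _) (S.prob_nonneg _ _))) (div_self_le_one _)
    · rw [if_neg hz, zero_div, mul_zero]
      refine (Finset.sum_eq_zero fun ω _ => ?_).le
      have : ¬ ((X a, Z a) = (X ω, Z ω) ∧ (Y b, Z b) = (Y ω, Z ω)) := by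
        rintro ⟨h2, h3⟩
        simp only [Prod.mk.injEq] at h2 h3
        exact hz (h3.2.trans h2.2.symm)
      rcases not_and_or.1 this with h | h <;> simp [h]
  calc _ = ∑ a, ∑ b, ∑ ω, (if (X a, Z a) = (X ω, Z ω) then S.p a else 0) *
      (if (Y b, Z b) = (Y ω, Z ω) then S.p b else 0) * (S.p ω /
      (S.prob (fun ω => (X ω, Y ω, Z ω)) (X ω, Y ω, Z ω) * S.prob Z (Z ω))) := by
        rw [Finset.sum_congr rfl fun a _ => Finset.sum_comm, Finset.sum_comm]
        refine Finset.sum_congr rfl fun ω _ => ?_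
        simp only [← Finset.sum_mul, ← Finset.mul_sum]
        rw [← S.prob_eq fun ω => (X ω, Z ω), ← S.prob_eq fun ω => (Y ω, Z ω)]
        ring
    _ ≤ ∑ a, ∑ b, S.p a * ((if Z b = Z a then S.p b else 0) / S.prob Z (Z a)) :=
        Finset.sum_le_sum fun a _ => Finset.sum_le_sum fun b _ => key a b
    _ ≤ ∑ a, S.p a := by
        refine Finset.sum_le_sum fun a _ => ?_
        rw [← Finset.mul_sum, ← Finset.sum_div]
        exact mul_le_of_le_one_right (S.p_nonneg _) (div_self_le_one (S.prob Z (Z a)))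
    _ = 1 := S.p_sum

/-- Submodularity of entropy: `I(X ; Y | Z) ≥ 0`. -/
lemma H_submod (X : S.Ω → α) (Y : S.Ω → β) (Z : S.Ω → γ) :
    S.H (fun ω => (X ω, Y ω, Z ω)) + S.H Z ≤
      S.H (fun ω => (X ω, Z ω)) + S.H (fun ω => (Y ω, Z ω)) := by
  have h1 := S.sum_glued_le_one X Y Z
  unfold H
  have : ∑ ω, (S.p ω * Real.log (S.prob (fun ω => (X ω, Z ω)) (X ω, Z ω)) +
      S.p ω * Real.log (S.prob (fun ω => (Y ω, Z ω)) (Y ω, Z ω)) -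
      S.p ω * Real.log (S.prob (fun ω => (X ω, Y ω, Z ω)) (X ω, Y ω, Z ω)) -
      S.p ω * Real.log (S.prob Z (Z ω))) ≤
      ∑ ω, (S.p ω * (S.prob (fun ω => (X ω, Z ω)) (X ω, Z ω) *
      S.prob (fun ω => (Y ω, Z ω)) (Y ω, Z ω) /
      (S.prob (fun ω => (X ω, Y ω, Z ω)) (X ω, Y ω, Z ω) * S.prob Z (Z ω))) - S.p ω) := by
    refine Finset.sum_le_sum fun ω _ => ?_
    rcases (S.p_nonneg ω).eq_or_lt with h0 | h0
    · simp [← h0]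
    · have a1 := h0.trans_le (S.p_le_prob (fun ω => (X ω, Z ω)) ω)
      have a2 := h0.trans_le (S.p_le_prob (fun ω => (Y ω, Z ω)) ω)
      have a3 := h0.trans_le (S.p_le_prob (fun ω => (X ω, Y ω, Z ω)) ω)
      have a4 := h0.trans_le (S.p_le_prob Z ω)
      have hl := Real.log_le_sub_one_of_pos (div_pos (mul_pos a1 a2) (mul_pos a3 a4))
      rw [Real.log_div (mul_pos a1 a2).ne' (mul_pos a3 a4).ne', Real.log_mul a1.ne' a2.ne',
        Real.log_mul a3.ne' a4.ne'] at hl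
      nlinarith [mul_le_mul_of_nonneg_left hl h0.le]
  simp only [Finset.sum_sub_distrib, Finset.sum_add_distrib, S.p_sum] at this
  linarith

lemma H_const (c : α) : S.H (fun _ => c) = 0 := by
  simp [H, prob, S.p_sum]

lemma Hc_nonneg (X : S.Ω → α) (Y : S.Ω → β) : 0 ≤ S.Hc X Y :=
  sub_nonneg.2 (S.H_mono fun _ _ h => (Prod.ext_iff.1 h).2)

/-- Conditioning on more reduces entropy. -/
lemma Hc_anti (X : S.Ω → α) {Y : S.Ω → β} {Z : S.Ω → γ}
    (h : ∀ ω ω', Y ω = Y ω' → Z ω = Z ω') : S.Hc X Y ≤ S.Hc X Z := by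
  have h1 := S.H_submod X Y Z
  have h2 : S.H (fun ω => (Y ω, Z ω)) ≤ S.H Y :=
    S.H_mono fun ω ω' e => Prod.ext e (h _ _ e)
  have h3 : S.H (fun ω => (X ω, Y ω)) ≤ S.H (fun ω => (X ω, Y ω, Z ω)) :=
    S.H_mono fun ω ω' e => by simp only [Prod.mk.injEq] at e ⊢; exact ⟨e.1, e.2.1⟩
  unfold Hc
  linarith

lemma Hc_le_H (X : S.Ω → α) (Y : S.Ω → β) : S.Hc X Y ≤ S.H X := by
  have h1 := S.Hc_anti X (Y := Y) (Z := fun _ => ()) fun _ _ _ => rfl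
  have h2 : S.H (fun ω => (X ω, ())) ≤ S.H X := S.H_mono fun _ _ e => by simp [e]
  have h3 := S.H_const ()
  unfold Hc at *
  linarith

lemma Hc_mono {X : S.Ω → α} {X' : S.Ω → β} (Y : S.Ω → γ)
    (h : ∀ ω ω', X' ω = X' ω' → X ω = X ω') : S.Hc X Y ≤ S.Hc X' Y :=
  sub_le_sub_right (S.H_mono fun _ _ e => by
    simp only [Prod.mk.injEq] at e ⊢; exact ⟨h _ _ e.1, e.2⟩) _

lemma Hc_eq_zero {X : S.Ω → α} {Y : S.Ω → β} (h : ∀ ω ω', Y ω = Y ω' → X ω = X ω') :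
    S.Hc X Y = 0 :=
  le_antisymm (sub_nonpos.2 (S.H_mono fun _ _ e => Prod.ext (h _ _ e) e)) (S.Hc_nonneg _ _)

lemma Hc_chain (X : S.Ω → α) (Y : S.Ω → β) (Z : S.Ω → γ) :
    S.Hc (fun ω => (X ω, Y ω)) Z = S.Hc X Z + S.Hc Y (fun ω => (X ω, Z ω)) := by
  have : S.H (fun ω => ((X ω, Y ω), Z ω)) = S.H (fun ω => (Y ω, X ω, Z ω)) :=
    S.H_congr fun _ _ => by simp only [Prod.mk.injEq]; tauto
  unfold Hc
  linarith

lemma Hc_pair_le (X : S.Ω → α) (Y : S.Ω → β) (Z : S.Ω → γ) :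
    S.Hc (fun ω => (X ω, Y ω)) Z ≤ S.Hc X Z + S.Hc Y Z := by
  rw [Hc_chain]
  linarith [S.Hc_anti Y (Y := fun ω => (X ω, Z ω)) (Z := Z) fun _ _ e => (Prod.ext_iff.1 e).2]

/-- If `B` is almost surely determined by `R`, which also determines `C`, then conditioning on
`(B, C)` leaves at least as much entropy as conditioning on `R`. -/
lemma Hc_le_of_det (X : S.Ω → α) {B : S.Ω → β} {R : S.Ω → γ} {C : S.Ω → δ}
    (hB : S.Hc B R = 0) (hC : ∀ ω ω', R ω = R ω' → C ω = C ω') :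
    S.Hc X R ≤ S.Hc X (fun ω => (B ω, C ω)) := by
  refine le_trans ?_ (S.Hc_anti X (Y := fun ω => (B ω, R ω)) fun ω ω' e => ?_)
  · have := S.Hc_chain B X R
    have := S.Hc_mono R (X := X) (X' := fun ω => (B ω, X ω)) fun _ _ e => (Prod.ext_iff.1 e).2
    linarith
  · simp only [Prod.mk.injEq] at e ⊢
    exact ⟨e.1, hC _ _ e.2⟩

/-- Subadditivity of conditional entropy for a finite tuple. -/
lemma Hc_tuple_le (f : ℕ → S.Ω → ℕ) (Z : S.Ω → γ) (T : Finset ℕ) :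
    S.Hc (fun ω (j : T) => f j ω) Z ≤ ∑ j ∈ T, S.Hc (f j) Z := by
  induction T using Finset.induction_on with
  | empty => exact (S.Hc_eq_zero fun _ _ _ => funext fun j => absurd j.2 (Finset.notMem_empty _)).le
  | insert a T ha ih =>
    rw [Finset.sum_insert ha]
    refine le_trans ?_ ((S.Hc_pair_le (f a) (fun ω (j : T) => f j ω) Z).trans (by linarith))
    refine S.Hc_mono Z fun ω ω' e => ?_
    simp only [Prod.mk.injEq] at e
    funext ⟨j, hj⟩
    rcases Finset.mem_insert.1 hj with rfl | hj
    · exact e.1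
    · exact congrFun e.2 ⟨j, hj⟩

lemma H_tuple_le (f : ℕ → S.Ω → ℕ) (T : Finset ℕ) :
    S.H (fun ω (j : T) => f j ω) ≤ ∑ j ∈ T, S.H (f j) := by
  have h := S.Hc_tuple_le f (fun _ => ()) T
  have h1 : S.H (fun ω (j : T) => f j ω) ≤ S.H (fun ω => ((fun (j : T) => f j ω), ())) :=
    S.H_mono fun _ _ e => (Prod.ext_iff.1 e).1
  have h2 := Finset.sum_le_sum fun j (_ : j ∈ T) => S.Hc_le_H (f j) fun _ => ()
  have h3 := S.H_const ()
  unfold Hc at *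
  linarith

end Entropy

/-! ### Consequences of validity -/

section Scheme

variable {N K : ℕ} {L : ℝ} (S : PIRScheme N K L)

/-- All messages except `W m`, together with all queries. -/
def rest (m : ℕ) : S.Ω → (((Finset.Icc 1 K).erase m : Finset ℕ) → ℕ) ×
    ((Finset.Icc 1 N ×ˢ Finset.Icc 1 K : Finset (ℕ × ℕ)) → ℕ) :=
  fun ω => (S.jointW ((Finset.Icc 1 K).erase m) ω, S.allQ ω)

variable {S} {I P : ℕ → Finset ℕ}

lemma rest_eq_W {m j : ℕ} (hj : j ∈ Finset.Icc 1 K) (hjm : j ≠ m) (ω ω' : S.Ω)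
    (e : S.rest m ω = S.rest m ω') : (S.W j ω, S.allQ ω) = (S.W j ω', S.allQ ω') := by
  simp only [rest, Prod.mk.injEq] at e ⊢
  exact ⟨congrFun e.1 ⟨j, Finset.mem_erase.2 ⟨hjm, hj⟩⟩, e.2⟩

/-- The answer of a server that does not store `W m` is determined by the other messages and the
queries. -/
lemma IsValid.det_rest (hS : S.IsValid I P) {n k m : ℕ} (hn : n ∈ Finset.Icc 1 N)
    (hk : k ∈ Finset.Icc 1 K) (hm : m ∉ I n) : S.Hc (S.A n k) (S.rest m) = 0 := by
  refine le_antisymm ?_ (S.Hc_nonneg _ _)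
  rw [← hS.ans_det n hn k hk]
  refine S.Hc_anti _ fun ω ω' e => ?_
  simp only [rest, Prod.mk.injEq] at e ⊢
  refine ⟨funext fun ⟨j, hj⟩ => ?_, ?_⟩
  · exact congrFun e.1 ⟨j, Finset.mem_erase.2 ⟨fun h => hm (h ▸ hj),
      hS.priv_sub n hn (hS.stor_sub_priv n hn hj)⟩⟩
  · exact congrFun e.2 ⟨(n, k), Finset.mem_product.2 ⟨hn, hk⟩⟩

/-- Given the other messages and the queries, `W k` still has entropy at least `L`. -/
lemma IsValid.le_Hc_W (hS : S.IsValid I P) {k : ℕ} (hk : k ∈ Finset.Icc 1 K) :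
    L ≤ S.Hc (S.W k) (S.rest k) := by
  have h1 := hS.query_indep
  have h2 := hS.msg_indep
  have h3 : S.H (fun ω => (S.allW ω, S.allQ ω)) ≤ S.H (fun ω => (S.W k ω, S.rest k ω)) := by
    refine S.H_mono fun ω ω' e => ?_
    simp only [rest, Prod.mk.injEq] at e ⊢
    refine ⟨funext fun ⟨j, hj⟩ => ?_, e.2.2⟩
    by_cases hjk : j = k
    · subst hjk; exact e.1
    · exact congrFun e.2.1 ⟨j, Finset.mem_erase.2 ⟨hjk, hj⟩⟩
  have h4 : S.H (S.rest k) - S.H S.allQ ≤ S.H (S.jointW ((Finset.Icc 1 K).erase k)) :=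
    S.Hc_le_H (S.jointW ((Finset.Icc 1 K).erase k)) S.allQ
  have h5 := S.H_tuple_le S.W ((Finset.Icc 1 K).erase k)
  have h6 := Finset.add_sum_erase (Finset.Icc 1 K) (fun i => S.H (S.W i)) hk
  have h7 := hS.msg_entropy k hk
  change S.H (S.jointW ((Finset.Icc 1 K).erase k)) ≤ _ at h5
  unfold MI at h1
  unfold Hc
  linarith

/-- If only servers `a` and `b` store `W k`, decodability bounds `L` by what they reveal about
`W k` beyond the other messages. -/
lemma IsValid.le_of_decode (hS : S.IsValid I P) {k a b : ℕ} (hk : k ∈ Finset.Icc 1 K)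
    (hab : ∀ n ∈ Finset.Icc 1 N, n ≠ a → n ≠ b → k ∉ I n) :
    L ≤ S.Hc (S.A a k) (S.rest k) + S.Hc (S.A b k) (S.rest k) := by
  have h1 := hS.le_Hc_W hk
  have h2 := S.Hc_pair_le (S.A a k) (S.A b k) (S.rest k)
  -- The answers of `a` and `b` determine all other answers, hence `W k`.
  have h3 : S.Hc (S.ansVec k) (fun ω => ((S.A a k ω, S.A b k ω), S.rest k ω)) ≤ 0 := by
    refine (S.Hc_tuple_le (fun n => S.A n k) _ _).trans
      (Finset.sum_nonpos fun n hn => ?_)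
    by_cases hna : n = a
    · subst hna
      exact (S.Hc_eq_zero fun _ _ e => by simp only [Prod.mk.injEq] at e; exact e.1.1).le
    by_cases hnb : n = b
    · subst hnb
      exact (S.Hc_eq_zero fun _ _ e => by simp only [Prod.mk.injEq] at e; exact e.1.2).le
    rw [← hS.det_rest hn hk (hab n hn hna hnb)]
    exact S.Hc_anti _ fun _ _ e => (Prod.ext_iff.1 e).2
  have h4 := S.Hc_chain (fun ω => (S.A a k ω, S.A b k ω)) (S.ansVec k) (S.rest k)
  have h5 := S.Hc_chain (S.ansVec k) (S.W k) (S.rest k)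
  have h6 : S.Hc (S.W k) (fun ω => (S.ansVec k ω, S.rest k ω)) ≤ 0 := by
    rw [← hS.decodable k hk]
    refine S.Hc_anti _ fun _ _ e => ?_
    simp only [rest, Prod.mk.injEq] at e ⊢
    exact ⟨e.1, e.2.2⟩
  have h7 := S.Hc_mono (S.rest k) (X := S.W k) (X' := fun ω => (S.ansVec k ω, S.W k ω))
    fun _ _ e => (Prod.ext_iff.1 e).2
  have h8 := S.Hc_mono (S.rest k) (X := S.ansVec k)
    (X' := fun ω => ((S.A a k ω, S.A b k ω), S.ansVec k ω)) fun _ _ e => (Prod.ext_iff.1 e).2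
  linarith

/-- Lower bound on the download cost by the chain rule for the answers of `a`, `b`, `c` given `W k`.
Each answer is conditioned on all messages but one (`u`, `v`, `w` respectively); this costs nothing
more than lost entropy as long as the omitted message is neither `W k` nor stored by the servers
before it in the chain, since then the conditioning already determines their answers. -/
lemma IsValid.download_lower (hS : S.IsValid I P) {k a b c u v w : ℕ}
    (hk : k ∈ Finset.Icc 1 K) (ha : a ∈ Finset.Icc 1 N) (hb : b ∈ Finset.Icc 1 N)
    (hc : c ∈ Finset.Icc 1 N) (hu : k ≠ u) (hv : k ≠ v) (hw : k ≠ w)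
    (hva : v ∉ I a) (hwa : w ∉ I a) (hwb : w ∉ I b) :
    L + S.Hc (S.A a k) (S.rest u) + S.Hc (S.A b k) (S.rest v) + S.Hc (S.A c k) (S.rest w) ≤
      S.D k := by
  set C : S.Ω → _ := fun ω => (S.W k ω, S.allQ ω) with hC
  have h1 : S.Hc (S.ansVec k) S.allQ ≤ S.D k :=
    (S.Hc_tuple_le (fun n => S.A n k) S.allQ _).trans
      (Finset.sum_le_sum fun n _ => S.Hc_le_H _ _)
  have h2 := S.Hc_chain (S.ansVec k) (S.W k) S.allQ
  have h2' := S.Hc_chain (S.W k) (S.ansVec k) S.allQ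
  have h2'' := S.Hc_mono S.allQ (X := fun ω => (S.W k ω, S.ansVec k ω))
    (X' := fun ω => (S.ansVec k ω, S.W k ω)) fun _ _ e => by
      simp only [Prod.mk.injEq] at e ⊢; exact e.symm
  have h3 := hS.decodable k hk
  have h4 : L ≤ S.Hc (S.W k) S.allQ :=
    (hS.le_Hc_W hk).trans (S.Hc_anti _ fun _ _ e => (Prod.ext_iff.1 e).2)
  have h5 : S.Hc (fun ω => ((S.A a k ω, S.A b k ω), S.A c k ω)) C ≤ S.Hc (S.ansVec k) C :=
    S.Hc_mono C fun ω ω' e => by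
      have e' : ∀ n ∈ Finset.Icc 1 N, S.A n k ω = S.A n k ω' := fun n hn => congrFun e ⟨n, hn⟩
      rw [e' a ha, e' b hb, e' c hc]
  have h6 := S.Hc_chain (fun ω => (S.A a k ω, S.A b k ω)) (S.A c k) C
  have h7 := S.Hc_chain (S.A a k) (S.A b k) C
  have h8 : S.Hc (S.A a k) (S.rest u) ≤ S.Hc (S.A a k) C := S.Hc_anti _ (rest_eq_W hk hu)
  have h9 := S.Hc_le_of_det (S.A b k) (hS.det_rest ha hk hva) (rest_eq_W hk hv)
  have h10 : S.Hc (fun ω => (S.A a k ω, S.A b k ω)) (S.rest w) = 0 := by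
    have := S.Hc_pair_le (S.A a k) (S.A b k) (S.rest w)
    rw [hS.det_rest ha hk hwa, hS.det_rest hb hk hwb] at this
    exact le_antisymm (by linarith) (S.Hc_nonneg _ _)
  have h11 := S.Hc_le_of_det (S.A c k) h10 (rest_eq_W hk hw)
  linarith

/-- The privacy constraint, conditioned on all messages but `W m`. -/
lemma IsValid.priv_rest (hS : S.IsValid I P) {n θ θ' : ℕ} (hn : n ∈ Finset.Icc 1 N)
    (h : θ ∈ P n) (h' : θ' ∈ P n) (m : ℕ) :
    S.Hc (S.A n θ) (S.rest m) = S.Hc (S.A n θ') (S.rest m) :=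
  hS.privacy n hn θ h θ' h' _ (Finset.erase_subset _ _)

end Scheme

end PIRScheme

/-! ### Cyclic indices -/

section Cyclic

variable {N : ℕ}

lemma cyc_mem (hN : 6 ≤ N) (m : ℤ) : cyc N m ∈ Finset.Icc 1 N := by
  have h1 := Int.emod_nonneg (m - 1) (show (N : ℤ) ≠ 0 by omega)
  have h2 := Int.emod_lt_of_pos (m - 1) (show (0 : ℤ) < N by omega)
  simp only [cyc, Finset.mem_Icc]
  omega

lemma cyc_eq_iff (hN : 6 ≤ N) (a b : ℤ) : cyc N a = cyc N b ↔ (N : ℤ) ∣ a - b := by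
  have h1 := Int.emod_nonneg (a - 1) (show (N : ℤ) ≠ 0 by omega)
  have h2 := Int.emod_nonneg (b - 1) (show (N : ℤ) ≠ 0 by omega)
  have : cyc N a = cyc N b ↔ (a - 1) % (N : ℤ) = (b - 1) % (N : ℤ) := by
    simp only [cyc]; omega
  rw [this, Int.emod_eq_emod_iff_emod_sub_eq_zero, ← Int.dvd_iff_emod_eq_zero]
  ring_nf

lemma cyc_dvd (hN : 6 ≤ N) (m : ℤ) : (N : ℤ) ∣ (cyc N m : ℤ) - m := by
  have h1 := Int.emod_nonneg (m - 1) (show (N : ℤ) ≠ 0 by omega)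
  have h2 := Int.mul_ediv_add_emod (m - 1) N
  refine ⟨- ((m - 1) / N), ?_⟩
  simp only [cyc]
  rw [Int.toNat_of_nonneg (by omega)]
  linarith

lemma cyc_self {k : ℕ} (hk : k ∈ Finset.Icc 1 N) : cyc N (k : ℤ) = k := by
  rw [Finset.mem_Icc] at hk
  simp only [cyc]
  rw [Int.emod_eq_of_lt (by omega) (by omega)]
  omega

lemma cyc_cyc_add (hN : 6 ≤ N) (m a : ℤ) : cyc N ((cyc N m : ℤ) + a) = cyc N (m + a) := by
  rw [cyc_eq_iff hN]
  have := cyc_dvd hN m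
  rwa [add_sub_add_right_eq_sub]

/-- Indices whose difference is small and nonzero stay distinct modulo `N`. -/
lemma cyc_ne (hN : 6 ≤ N) {a b : ℤ} (h0 : a ≠ b) (h1 : a - b < N) (h2 : b - a < N) :
    cyc N a ≠ cyc N b := by
  rw [Ne, cyc_eq_iff hN]
  intro h
  exact h0 (sub_eq_zero.1 (Int.eq_zero_of_abs_lt_dvd h (by rw [abs_lt]; omega)))

/-- Sums over all indices are invariant under cyclic shifts. -/
lemma sum_cyc_add (hN : 6 ≤ N) (a : ℤ) (f : ℕ → ℝ) :
    ∑ k ∈ Finset.Icc 1 N, f (cyc N ((k : ℤ) + a)) = ∑ k ∈ Finset.Icc 1 N, f k := by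
  refine Finset.sum_nbij' (fun k => cyc N ((k : ℤ) + a)) (fun k => cyc N ((k : ℤ) + -a))
    (fun _ _ => cyc_mem hN _) (fun _ _ => cyc_mem hN _) (fun k hk => ?_) (fun k hk => ?_)
    (fun _ _ => rfl)
  · rw [cyc_cyc_add hN, add_neg_cancel_right, cyc_self hk]
  · rw [cyc_cyc_add hN, neg_add_cancel_right, cyc_self hk]

lemma mem_cycIndex_cyc (hN : 6 ≤ N) (m : ℤ) (j : ℕ) :
    j ∈ cycIndex N (cyc N m) ↔ j = cyc N (m - 1) ∨ j = cyc N m := by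
  have h0 := cyc_cyc_add hN m (-1)
  have h1 := cyc_cyc_add hN m 0
  simp only [add_zero, ← sub_eq_add_neg] at h0 h1
  simp [cycIndex, h0, h1]

lemma mem_cycInterval_two (a : ℤ) (j : ℕ) :
    j ∈ cycInterval N a 2 ↔ j = cyc N a ∨ j = cyc N (a + 1) := by
  simp [cycInterval, Finset.range_add_one, or_comm]

end Cyclic

/-- **Converse part of Theorem 5** (cyclic graph with `i`-th neighbor privacy): for
every `N ≥ 6`, every `i ∈ {2, …, N-3}`, and every PIR scheme with cyclic-graph
storage on `N` servers and privacy sets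
`𝒫_n = ℐ_n ∪ ℐ_{n+i} = {n-1, n, n+i-1, n+i} (mod N)`, the total download cost
satisfies `∑_{k=1}^N D k ≥ (5/2) N L`; equivalently, `R ≤ 2/5`. -/
theorem cyclic_ithNeighbor_converse (N i : ℕ) (hN : 6 ≤ N)
    (hi1 : 2 ≤ i) (hi2 : i + 3 ≤ N) (L : ℝ) (hL : 0 < L)
    (S : PIRScheme N N L)
    (hS : S.IsValid (cycIndex N)
      (fun n => cycInterval N ((n : ℤ) - 1) 2 ∪ cycInterval N ((n : ℤ) + (i : ℤ) - 1) 2)) :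
    5 / 2 * (N : ℝ) * L ≤ ∑ k ∈ Finset.Icc 1 N, S.D k ∧ S.rate ≤ 2 / 5 := by
  -- Server `n` uses the desired index `n` as its reference query.
  set x : ℕ → ℝ := fun n => S.Hc (S.A n n) (S.rest n) with hx
  set y : ℕ → ℝ := fun n => S.Hc (S.A n n) (S.rest (cyc N ((n : ℤ) - 1))) with hy
  have priv : ∀ (n : ℤ) (θ : ℤ), θ = n - 1 ∨ θ = n ∨ θ = n + i → ∀ m,
      S.Hc (S.A (cyc N n) (cyc N θ)) (S.rest m) =
        S.Hc (S.A (cyc N n) (cyc N n)) (S.rest m) := by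
    intro n θ hθ m
    have e := cyc_cyc_add hN n
    refine hS.priv_rest (cyc_mem hN n) ?_ ?_ m
    · have e1 := e (-1)
      have e2 := e 0
      have e3 := e i
      simp only [Finset.mem_union, mem_cycInterval_two, sub_eq_add_neg, add_zero,
        neg_add_cancel_right] at *
      rw [e1, e2, e3]
      rcases hθ with rfl | rfl | rfl <;> simp
    · have e2 := e 0
      simp only [Finset.mem_union, mem_cycInterval_two, sub_add_cancel, add_zero] at *
      rw [e2]
      simp
  have hy' : ∀ n : ℤ, y (cyc N n) =
      S.Hc (S.A (cyc N n) (cyc N n)) (S.rest (cyc N (n - 1))) := by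
    intro n
    have := cyc_cyc_add hN n (-1)
    simp only [← sub_eq_add_neg] at this
    simp only [hy]
    rw [this]
  have hA : ∀ k ∈ Finset.Icc 1 N, L ≤ x k + y (cyc N ((k : ℤ) + 1)) := by
    intro k hk
    have h := hS.le_of_decode (a := cyc N k) (b := cyc N ((k : ℤ) + 1)) hk (fun n hn h1 h2 h3 => by
      rw [← cyc_self hn, mem_cycIndex_cyc hN, ← cyc_self hk, cyc_eq_iff hN, cyc_eq_iff hN] at h3
      rw [← cyc_self hn, Ne, cyc_eq_iff hN] at h1 h2
      rcases h3 with h3 | h3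
      · exact h2 (dvd_sub_comm.1 (by rwa [sub_sub_eq_add_sub] at h3))
      · exact h1 (dvd_sub_comm.1 h3))
    have h1 := priv (k + 1) k (by left; ring) k
    rw [cyc_self hk] at h1 h
    rw [h1] at h
    have h2 := hy' (k + 1)
    rw [add_sub_cancel_right, cyc_self hk] at h2
    rwa [h2]
  have hB : ∀ k ∈ Finset.Icc 1 N, ∀ w : ℤ, w = (k : ℤ) - i ∨ w = (k : ℤ) - i - 1 →
      L + y k + x (cyc N ((k : ℤ) + 1)) +
        S.Hc (S.A (cyc N ((k : ℤ) + -i)) (cyc N ((k : ℤ) + -i))) (S.rest (cyc N w)) ≤ S.D k := by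
    intro k hk w hw
    have ck := cyc_self hk
    have ne : ∀ {a b : ℤ}, a ≠ b → a - b < N → b - a < N → cyc N a ≠ cyc N b := cyc_ne hN
    have h := hS.download_lower (k := cyc N k) (a := cyc N k) (b := cyc N ((k : ℤ) + 1))
      (c := cyc N ((k : ℤ) + -i)) (u := cyc N ((k : ℤ) - 1)) (v := cyc N ((k : ℤ) + 1))
      (w := cyc N w) (cyc_mem hN _) (cyc_mem hN _) (cyc_mem hN _) (cyc_mem hN _)
      (ne (by omega) (by omega) (by omega)) (ne (by omega) (by omega) (by omega))
      (ne (by omega) (by omega) (by omega))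
      (by
        rw [mem_cycIndex_cyc hN, not_or]
        exact ⟨ne (by omega) (by omega) (by omega), ne (by omega) (by omega) (by omega)⟩)
      (by
        rw [mem_cycIndex_cyc hN, not_or]
        exact ⟨ne (by omega) (by omega) (by omega), ne (by omega) (by omega) (by omega)⟩)
      (by
        rw [mem_cycIndex_cyc hN, not_or]
        exact ⟨ne (by omega) (by omega) (by omega), ne (by omega) (by omega) (by omega)⟩)
    have h2 := hy' k
    rw [priv (k + 1) k (by left; ring), priv (k + -i) k (by right; right; ring), ← h2, ck] at h
    exact h
  have sA := Finset.sum_le_sum hA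
  have sB1 := Finset.sum_le_sum fun k hk => hB k hk _ (Or.inl rfl)
  have sB2 := Finset.sum_le_sum fun k hk => hB k hk _ (Or.inr rfl)
  have ex : ∀ k : ℕ, S.Hc (S.A (cyc N ((k : ℤ) + -i)) (cyc N ((k : ℤ) + -i)))
      (S.rest (cyc N ((k : ℤ) - i))) = x (cyc N ((k : ℤ) + -i)) := fun k => by
    rw [sub_eq_add_neg]
  have ey : ∀ k : ℕ, S.Hc (S.A (cyc N ((k : ℤ) + -i)) (cyc N ((k : ℤ) + -i)))
      (S.rest (cyc N ((k : ℤ) - i - 1))) = y (cyc N ((k : ℤ) + -i)) := fun k => by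
    rw [hy', sub_eq_add_neg (k : ℤ)]
  simp only [ex, ey, Finset.sum_add_distrib, sum_cyc_add hN, Finset.sum_const, Nat.card_Icc,
    add_tsub_cancel_right, nsmul_eq_mul] at sA sB1 sB2
  have main : 5 / 2 * (N : ℝ) * L ≤ ∑ k ∈ Finset.Icc 1 N, S.D k := by linarith
  have hNpos : (0 : ℝ) < N := by exact_mod_cast (by omega : 0 < N)
  refine ⟨main, ?_⟩
  have hpos : 0 < 5 / 2 * (N : ℝ) * L := by positivity
  unfold PIRScheme.rate
  rw [div_le_iff₀ (hpos.trans_le main)]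
  linarith
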